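/- Let G=(V,E) be a tree (a finite connected acyclic simple graph). Then the total matching polytope P_T(G) equals exactly the set of points (x,y)∈ℝ^V×ℝ^E satisfying: x_v + Σ_{e∈δ(v)} y_e ≤ 1 for every v∈V; x_v + x_w + y_e ≤ 1 for every edge e={v,w}∈E; and x_v ≥ 0, y_e ≥ 0 for all v∈V, e∈E. -/

import Mathlib

/-!
Total matchings are the independent sets of the total graph on `V ⊕ E`. Root the forest and order
its elements from the roots outwards, each edge between its two ends. The earlier neighbors of a
vertex are its parent and the edge to its parent, and those of an edge lie in the star of its
parent end, so they are contained in cliques whose inequalities are among the given ones. A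
nonnegative point satisfying these inequalities is then decomposed greedily along the order: weight
on a new element `a` is taken from the independent sets that miss the clique of `a`, whose total
weight is exactly the slack of the clique inequality before `a` is added.
-/

open Finset

variable {V : Type*}

/-- Adjacency between elements (vertices and edges) of a graph. -/
def elemAdj (G : SimpleGraph V) : V ⊕ G.edgeSet → V ⊕ G.edgeSet → Prop
  | Sum.inl v, Sum.inl w => G.Adj v w
  | Sum.inl v, Sum.inr e => v ∈ (e : Sym2 V)
  | Sum.inr e, Sum.inl v => v ∈ (e : Sym2 V)
  | Sum.inr e, Sum.inr f => e ≠ f ∧ ∃ v, v ∈ (e : Sym2 V) ∧ v ∈ (f : Sym2 V)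

/-- A total matching is a set of pairwise non-adjacent elements. -/
def IsTotalMatching (G : SimpleGraph V) (T : Set (V ⊕ G.edgeSet)) : Prop :=
  ∀ d ∈ T, ∀ d' ∈ T, d ≠ d' → ¬ elemAdj G d d'

/-- Characteristic vector of a set of elements. -/
noncomputable def charVec (G : SimpleGraph V) (T : Set (V ⊕ G.edgeSet)) :
    V ⊕ G.edgeSet → ℝ :=
  T.indicator fun _ => 1

/-- The total matching polytope: convex hull of characteristic vectors of total matchings. -/
def totalMatchingPolytope (G : SimpleGraph V) : Set ((V ⊕ G.edgeSet) → ℝ) :=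
  convexHull ℝ {z | ∃ T, IsTotalMatching G T ∧ z = charVec G T}

section StableSetPolytope

variable {α : Type*} {H : SimpleGraph α} {S T : Set α} {C : Finset α} {a : α} {x z : α → ℝ}

/-- The stable set polytope of the subgraph of `H` induced on `S`, embedded in the coordinate space
of the whole graph. -/
def stableSetPolytope (H : SimpleGraph α) (S : Set α) : Set (α → ℝ) :=
  convexHull ℝ {z | ∃ T, H.IsIndepSet T ∧ T ⊆ S ∧ z = T.indicator 1}

theorem sum_indicator_one_eq_one_of_isClique (hT : H.IsIndepSet T) (hC : H.IsClique C)
    {d : α} (hdC : d ∈ C) (hdT : d ∈ T) : ∑ c ∈ C, T.indicator (1 : α → ℝ) c = 1 := by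
  rw [sum_eq_single_of_mem d hdC, Set.indicator_of_mem hdT, Pi.one_apply]
  exact fun c hcC hcd => Set.indicator_of_notMem (fun hcT => hT hcT hdT hcd (hC hcC hdC hcd)) 1

theorem sum_indicator_one_eq_zero_of_forall_notMem (hCT : ∀ c ∈ C, c ∉ T) :
    ∑ c ∈ C, T.indicator (1 : α → ℝ) c = 0 :=
  sum_eq_zero fun c hc => Set.indicator_of_notMem (hCT c hc) 1

theorem nonneg_of_mem_stableSetPolytope (hz : z ∈ stableSetPolytope H S) (d : α) : 0 ≤ z d := by
  refine convexHull_min (t := Set.Ici 0) ?_ (convex_Ici 0) hz d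
  rintro _ ⟨T, -, -, rfl⟩
  exact Set.indicator_nonneg fun _ _ => zero_le_one

theorem sum_le_one_of_mem_stableSetPolytope (hC : H.IsClique C)
    (hz : z ∈ stableSetPolytope H S) : ∑ d ∈ C, z d ≤ 1 := by
  have hconvex : Convex ℝ {y : α → ℝ | ∑ d ∈ C, y d ≤ 1} := by
    simpa [Set.preimage] using (convex_Iic (1 : ℝ)).linear_preimage
      (∑ d ∈ C, LinearMap.proj d : (α → ℝ) →ₗ[ℝ] ℝ)
  refine convexHull_min ?_ hconvex hz
  rintro _ ⟨T, hT, -, rfl⟩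
  by_cases hCT : ∃ d ∈ C, d ∈ T
  · obtain ⟨d, hdC, hdT⟩ := hCT
    exact (sum_indicator_one_eq_one_of_isClique hT hC hdC hdT).le
  · push Not at hCT
    exact (sum_indicator_one_eq_zero_of_forall_notMem hCT).trans_le zero_le_one

theorem stableSetPolytope_mono {S' : Set α} (h : S ⊆ S') :
    stableSetPolytope H S ⊆ stableSetPolytope H S' :=
  convexHull_mono fun _ ⟨T, hT, hTS, hz⟩ => ⟨T, hT, hTS.trans h, hz⟩

theorem isIndepSet_insert_of_forall_not_adj (hT : H.IsIndepSet T)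
    (haT : ∀ d ∈ T, ¬ H.Adj a d) : H.IsIndepSet (insert a T) :=
  hT.insert fun d hd _ => ⟨haT d hd, fun hda => haT d hd hda.symm⟩

section AddSlack

variable [DecidableEq α]

theorem indicator_insert_eq_add_single {M : Type*} [AddZeroClass M] (haT : a ∉ T) (f : α → M) :
    (insert a T).indicator f = T.indicator f + Pi.single a (f a) := by
  rw [← Set.union_singleton, Set.indicator_union_of_disjoint (Set.disjoint_singleton_right.2 haT),
    Set.indicator_singleton]
  rfl

/-- The affine map raising the coordinate `a` by the slack of the inequality `∑ d ∈ C, x d ≤ 1`. -/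
noncomputable def addSlack (C : Finset α) (a : α) : (α → ℝ) →ᵃ[ℝ] (α → ℝ) :=
  AffineMap.id ℝ _ + (LinearMap.single ℝ (fun _ => ℝ) a).toAffineMap.comp
    (AffineMap.const ℝ _ 1 - (∑ d ∈ C, LinearMap.proj d : (α → ℝ) →ₗ[ℝ] ℝ).toAffineMap)

theorem addSlack_apply : addSlack C a x = x + Pi.single a (1 - ∑ d ∈ C, x d) := by
  simp [addSlack]

theorem addSlack_indicator_of_mem (hT : H.IsIndepSet T) (hC : H.IsClique C)
    {d : α} (hdC : d ∈ C) (hdT : d ∈ T) : addSlack C a (T.indicator 1) = T.indicator 1 := by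
  rw [addSlack_apply, sum_indicator_one_eq_one_of_isClique hT hC hdC hdT, sub_self,
    Pi.single_zero, add_zero]

theorem addSlack_indicator_of_forall_notMem (haT : a ∉ T) (hCT : ∀ c ∈ C, c ∉ T) :
    addSlack C a (T.indicator 1) = (insert a T).indicator 1 := by
  rw [addSlack_apply, sum_indicator_one_eq_zero_of_forall_notMem hCT, sub_zero,
    indicator_insert_eq_add_single haT, Pi.one_apply]

-- An independent set meets `C` at most once: if it does, its slack vanishes; otherwise its slack is
-- one and `a` can be added to it. Since `addSlack` is affine, this suffices.
theorem addSlack_mem_stableSetPolytope (hC : H.IsClique C) (haC : a ∈ C)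
    (hN : ∀ d ∈ S, H.Adj a d → d ∈ C) (hx : x ∈ stableSetPolytope H S) :
    addSlack C a x ∈ stableSetPolytope H (insert a S) := by
  refine convexHull_min ?_ ((convex_convexHull ℝ _).affine_preimage (addSlack C a)) hx
  rintro _ ⟨T, hT, hTS, rfl⟩
  apply subset_convexHull
  by_cases hCT : ∃ d ∈ C, d ∈ T
  · obtain ⟨d, hdC, hdT⟩ := hCT
    exact ⟨T, hT, hTS.trans (Set.subset_insert a S), addSlack_indicator_of_mem hT hC hdC hdT⟩
  · push Not at hCT
    have hnadj : ∀ d ∈ T, ¬ H.Adj a d := fun d hdT had => hCT d (hN d (hTS hdT) had) hdT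
    exact ⟨insert a T, isIndepSet_insert_of_forall_not_adj hT hnadj, Set.insert_subset_insert hTS,
      addSlack_indicator_of_forall_notMem (hCT a haC) hCT⟩

theorem add_single_mem_stableSetPolytope (hC : H.IsClique C) (haC : a ∈ C)
    (hN : ∀ d ∈ S, H.Adj a d → d ∈ C) (hx : x ∈ stableSetPolytope H S) {t : ℝ} (ht : 0 ≤ t)
    (htC : t + ∑ d ∈ C, x d ≤ 1) : x + Pi.single a t ∈ stableSetPolytope H (insert a S) := by
  have ht_mem : t ∈ segment ℝ 0 (1 - ∑ d ∈ C, x d) := by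
    rw [segment_eq_Icc (by linarith)]
    exact ⟨ht, by linarith⟩
  obtain ⟨μ, ν, hμ, hν, hμν, rfl⟩ := ht_mem
  have hcomb := convex_convexHull ℝ _ (stableSetPolytope_mono (Set.subset_insert a S) hx)
    (addSlack_mem_stableSetPolytope hC haC hN hx) hμ hν hμν
  rwa [addSlack_apply, smul_add, ← add_assoc, ← add_smul, hμν, one_smul, ← Pi.single_smul,
    ← zero_add (ν • (1 - _)), ← smul_zero μ] at hcomb

end AddSlack

theorem indicator_mem_stableSetPolytope {β : Type*} [LinearOrder β] (ρ : α → β)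
    (hz : ∀ d, 0 ≤ z d)
    (hC : ∀ a, ∃ C : Finset α, H.IsClique C ∧ ∑ d ∈ C, z d ≤ 1 ∧ a ∈ C ∧
      ∀ d, H.Adj a d → ρ d ≤ ρ a → d ∈ C) (S : Finset α) :
    (S : Set α).indicator z ∈ stableSetPolytope H S := by
  classical
  induction S using Finset.induction_on_max_value ρ with
  | empty => exact subset_convexHull ℝ _ ⟨∅, by simp, by simp, by simp⟩
  | insert a S haS hmax ih =>
    obtain ⟨C, hclique, hsum, haC, hN⟩ := hC a
    have hslack : z a + ∑ d ∈ C, (S : Set α).indicator z d ≤ 1 := by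
      calc z a + ∑ d ∈ C, (S : Set α).indicator z d
          = z a + ∑ d ∈ C.erase a, (S : Set α).indicator z d := by
            rw [sum_erase _ (Set.indicator_of_notMem (by simpa using haS) z)]
        _ ≤ z a + ∑ d ∈ C.erase a, z d := by
            gcongr with d
            exact Set.indicator_le_self' (fun d _ => hz d) d
        _ = ∑ d ∈ C, z d := add_sum_erase C z haC
        _ ≤ 1 := hsum
    rw [coe_insert, indicator_insert_eq_add_single (mod_cast haS)]
    exact add_single_mem_stableSetPolytope hclique haC (fun d hdS had => hN d had (hmax d hdS)) ih
      (hz a) hslack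

theorem stableSetPolytope_univ_eq_of_cliqueCover [Finite α] {β : Type*} [LinearOrder β]
    (ρ : α → β) {F : Set (Finset α)} (hF : ∀ C ∈ F, H.IsClique C)
    (hcover : ∀ a, ∃ C ∈ F, a ∈ C ∧ ∀ d, H.Adj a d → ρ d ≤ ρ a → d ∈ C) :
    stableSetPolytope H Set.univ = {z | (∀ d, 0 ≤ z d) ∧ ∀ C ∈ F, ∑ d ∈ C, z d ≤ 1} := by
  have := Fintype.ofFinite α
  refine Set.Subset.antisymm (fun z hz => ⟨nonneg_of_mem_stableSetPolytope hz,
    fun C hC => sum_le_one_of_mem_stableSetPolytope (hF C hC) hz⟩) fun z ⟨hz, hsum⟩ => ?_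
  have hC : ∀ a, ∃ C : Finset α, H.IsClique C ∧ ∑ d ∈ C, z d ≤ 1 ∧ a ∈ C ∧
      ∀ d, H.Adj a d → ρ d ≤ ρ a → d ∈ C := fun a =>
    let ⟨C, hCF, hCa⟩ := hcover a
    ⟨C, hF C hCF, hsum C hCF, hCa⟩
  simpa using indicator_mem_stableSetPolytope ρ hz hC univ

end StableSetPolytope

section ForestOrder

/-- A numbering of the vertices witnessing that `G` is a forest: adjacent vertices have different
numbers, and each vertex has at most one neighbor (its parent) with a smaller number. -/
structure IsForestOrder (G : SimpleGraph V) (ρ : V → ℕ) : Prop where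
  ne_of_adj : ∀ ⦃v w⦄, G.Adj v w → ρ v ≠ ρ w
  parent_unique : ∀ ⦃v p q⦄, G.Adj v p → G.Adj v q → ρ p < ρ v → ρ q < ρ v → p = q

theorem IsForestOrder.anti {G G' : SimpleGraph V} {ρ : V → ℕ} (hρ : IsForestOrder G' ρ)
    (h : G ≤ G') : IsForestOrder G ρ :=
  ⟨fun _ _ hvw => hρ.ne_of_adj (h hvw), fun _ _ _ hp hq => hρ.parent_unique (h hp) (h hq)⟩

theorem eq_penultimate_of_dist_lt {G : SimpleGraph V} (hG : G.IsTree) {r v w : V}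
    {p : G.Walk r v} (hp : p.IsPath) (hvw : G.Adj v w) (hlt : G.dist r w < G.dist r v) :
    w = p.penultimate := by
  refine hG.isAcyclic.eq_penultimate_of_adj_end hp hvw (by_contra fun hw => ?_)
  obtain ⟨q, hq, hq_length⟩ := hG.connected.exists_path_of_dist r w
  have hv : v ∈ q.support :=
    hG.isAcyclic.mem_support_of_ne_mem_support_of_adj_of_isPath hq hp hvw.symm hw
  have hlength : q.length = p.length + 1 := by
    rw [hG.isAcyclic.path_concat hp hq hvw hv, SimpleGraph.Walk.length_concat]
  have := G.dist_le p
  omega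

theorem isForestOrder_dist {G : SimpleGraph V} (hG : G.IsTree) (r : V) :
    IsForestOrder G (G.dist r) where
  ne_of_adj _ _ := hG.dist_ne_of_adj r
  parent_unique v _ _ hp hq hlt_p hlt_q := by
    obtain ⟨P, hP, -⟩ := hG.connected.exists_path_of_dist r v
    rw [eq_penultimate_of_dist_lt hG hP hp hlt_p, eq_penultimate_of_dist_lt hG hP hq hlt_q]

theorem exists_isForestOrder {G : SimpleGraph V} (hG : G.IsAcyclic) :
    ∃ ρ, IsForestOrder G ρ := by
  cases isEmpty_or_nonempty V with
  | inl _ => exact ⟨0, fun v => isEmptyElim v, fun v => isEmptyElim v⟩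
  | inr _ =>
    let r : V := Classical.arbitrary V
    obtain ⟨T, hGT, -, hT⟩ :=
      SimpleGraph.connected_top.exists_isTree_le_of_le_of_isAcyclic le_top hG
    exact ⟨T.dist r, (isForestOrder_dist hT r).anti hGT⟩

end ForestOrder

section TotalGraph

/-- The total graph of `G`, whose independent sets are the total matchings of `G`. -/
def totalGraph (G : SimpleGraph V) : SimpleGraph (V ⊕ G.edgeSet) where
  Adj := elemAdj G
  symm := ⟨by
    rintro (v | e) (w | f) h
    exacts [SimpleGraph.Adj.symm h, h, h, ⟨h.1.symm, h.2.imp fun _ => And.symm⟩]⟩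
  loopless := ⟨by
    rintro (v | e) h
    exacts [G.irrefl h, h.1 rfl]⟩

theorem totalMatchingPolytope_eq_stableSetPolytope (G : SimpleGraph V) :
    totalMatchingPolytope G = stableSetPolytope (totalGraph G) Set.univ := by
  simp only [totalMatchingPolytope, stableSetPolytope, Set.subset_univ, true_and]
  rfl

/-- An edge together with its two endpoints, as a clique of the total graph. -/
def edgeTriangle [DecidableEq V] {G : SimpleGraph V} {v w : V} (h : G.Adj v w) :
    Finset (V ⊕ G.edgeSet) :=
  ({v, w} : Finset V).disjSum {⟨s(v, w), G.mem_edgeSet.mpr h⟩}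

theorem sum_edgeTriangle [DecidableEq V] {G : SimpleGraph V} {v w : V} (h : G.Adj v w)
    {M : Type*} [AddCommMonoid M] (z : V ⊕ G.edgeSet → M) :
    ∑ d ∈ edgeTriangle h, z d = z (Sum.inl v) + z (Sum.inl w) +
      z (Sum.inr ⟨s(v, w), G.mem_edgeSet.mpr h⟩) := by
  rw [edgeTriangle, sum_disjSum, sum_pair h.ne, sum_singleton]

theorem isClique_edgeTriangle [DecidableEq V] {G : SimpleGraph V} {v w : V} (h : G.Adj v w) :
    (totalGraph G).IsClique (edgeTriangle h) := by
  rintro (x | e) hx (y | f) hy hne <;>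
    simp only [edgeTriangle, mem_coe, inl_mem_disjSum, inr_mem_disjSum, mem_insert,
      mem_singleton] at hx hy
  · rcases hx with rfl | rfl <;> rcases hy with rfl | rfl
    exacts [absurd rfl hne, h, h.symm, absurd rfl hne]
  · subst hy
    exact Sym2.mem_iff.2 hx
  · subst hx
    exact Sym2.mem_iff.2 hy
  · exact absurd (congrArg Sum.inr (hx.trans hy.symm)) hne

/-- The elimination order of the total graph induced by a numbering of the vertices, in which an
edge comes halfway between its endpoints; ranks are doubled to keep them integral. -/
def elemRank (G : SimpleGraph V) (ρ : V → ℕ) : V ⊕ G.edgeSet → ℕ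
  | Sum.inl v => 2 * ρ v
  | Sum.inr e => ((e : Sym2 V).map ρ).add

theorem exists_parent_of_adj_inl [DecidableEq V] {G : SimpleGraph V} {ρ : V → ℕ}
    (hρ : IsForestOrder G ρ) {v : V} {d : V ⊕ G.edgeSet}
    (hadj : (totalGraph G).Adj (Sum.inl v) d) (hd : elemRank G ρ d ≤ elemRank G ρ (Sum.inl v)) :
    ∃ p, ∃ h : G.Adj v p, ρ p < ρ v ∧ d ∈ edgeTriangle h := by
  rcases d with w | ⟨e, he⟩
  · have hadj : G.Adj v w := hadj
    have hne := hρ.ne_of_adj hadj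
    have hd : 2 * ρ w ≤ 2 * ρ v := hd
    exact ⟨w, hadj, by omega, by simp [edgeTriangle]⟩
  · obtain ⟨w, rfl⟩ := Sym2.mem_iff_exists.1 (show v ∈ e from hadj)
    have hadj : G.Adj v w := he
    have hne := hρ.ne_of_adj hadj
    have hd : ρ v + ρ w ≤ 2 * ρ v := hd
    exact ⟨w, hadj, by omega, by simp [edgeTriangle]⟩

variable [Fintype V] [DecidableEq V] (G : SimpleGraph V) [DecidableRel G.Adj]

/-- A vertex together with its incident edges, as a clique of the total graph. -/
def vertexStar (v : V) : Finset (V ⊕ G.edgeSet) :=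
  ({v} : Finset V).disjSum {e : G.edgeSet | v ∈ (e : Sym2 V)}

theorem inl_mem_vertexStar {v w : V} : Sum.inl w ∈ vertexStar G v ↔ w = v := by
  simp [vertexStar]

theorem inr_mem_vertexStar {v : V} {e : G.edgeSet} :
    Sum.inr e ∈ vertexStar G v ↔ v ∈ (e : Sym2 V) := by
  simp [vertexStar]

theorem sum_vertexStar {M : Type*} [AddCommMonoid M] (v : V) (z : V ⊕ G.edgeSet → M) :
    ∑ d ∈ vertexStar G v, z d =
      z (Sum.inl v) + ∑ e : G.edgeSet, (if v ∈ (e : Sym2 V) then z (Sum.inr e) else 0) := by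
  rw [vertexStar, sum_disjSum, sum_singleton, sum_filter]

theorem isClique_vertexStar (v : V) : (totalGraph G).IsClique (vertexStar G v) := by
  rintro (x | e) hx (y | f) hy hne <;>
    simp only [mem_coe, inl_mem_vertexStar, inr_mem_vertexStar] at hx hy
  · exact absurd (congrArg Sum.inl (hx.trans hy.symm)) hne
  · exact hx ▸ hy
  · exact hy ▸ hx
  · exact ⟨fun hef => hne (congrArg Sum.inr hef), v, hx, hy⟩

/-- The cliques of the total graph whose inequalities describe the polytope of a forest. -/
def basicCliques : Set (Finset (V ⊕ G.edgeSet)) :=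
  {C | (∃ v, C = vertexStar G v) ∨ ∃ v w, ∃ h : G.Adj v w, C = edgeTriangle h}

theorem isClique_of_mem_basicCliques {C : Finset (V ⊕ G.edgeSet)} (hC : C ∈ basicCliques G) :
    (totalGraph G).IsClique C := by
  rcases hC with ⟨v, rfl⟩ | ⟨v, w, h, rfl⟩
  exacts [isClique_vertexStar G v, isClique_edgeTriangle h]

variable {G} {ρ : V → ℕ}

theorem exists_basicClique_inl (hρ : IsForestOrder G ρ) (v : V) :
    ∃ C ∈ basicCliques G, Sum.inl v ∈ C ∧ ∀ d, (totalGraph G).Adj (Sum.inl v) d →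
      elemRank G ρ d ≤ elemRank G ρ (Sum.inl v) → d ∈ C := by
  by_cases hp : ∃ p, G.Adj v p ∧ ρ p < ρ v
  · obtain ⟨p, hvp, hlt⟩ := hp
    refine ⟨edgeTriangle hvp, Or.inr ⟨v, p, hvp, rfl⟩, by simp [edgeTriangle], fun d hadj hd => ?_⟩
    obtain ⟨q, hvq, hlt', hdq⟩ := exists_parent_of_adj_inl hρ hadj hd
    obtain rfl := hρ.parent_unique hvp hvq hlt hlt'
    exact hdq
  · refine ⟨vertexStar G v, Or.inl ⟨v, rfl⟩, (inl_mem_vertexStar G).2 rfl, fun d hadj hd => ?_⟩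
    obtain ⟨q, hvq, hlt, -⟩ := exists_parent_of_adj_inl hρ hadj hd
    exact absurd ⟨q, hvq, hlt⟩ hp

theorem mem_vertexStar_of_adj_inr (hρ : IsForestOrder G ρ) {v p : V} (hvp : G.Adj v p)
    (hlt : ρ p < ρ v) {d : V ⊕ G.edgeSet}
    (hadj : (totalGraph G).Adj (Sum.inr ⟨s(v, p), hvp⟩) d)
    (hd : elemRank G ρ d ≤ elemRank G ρ (Sum.inr ⟨s(v, p), hvp⟩)) : d ∈ vertexStar G p := by
  rcases d with w | ⟨f, hf⟩
  · have hd : 2 * ρ w ≤ ρ v + ρ p := hd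
    rcases Sym2.mem_iff.1 (show w ∈ s(v, p) from hadj) with rfl | rfl
    · omega
    · exact (inl_mem_vertexStar G).2 rfl
  · obtain ⟨hne, u, hu, huf⟩ := hadj
    rcases Sym2.mem_iff.1 hu with rfl | rfl
    · obtain ⟨w, rfl⟩ := Sym2.mem_iff_exists.1 huf
      have hd : ρ u + ρ w ≤ ρ u + ρ p := hd
      have hpw : p = w := hρ.parent_unique hvp hf hlt (by omega)
      exact absurd (Subtype.ext (congrArg (s(u, ·)) hpw)) hne
    · exact (inr_mem_vertexStar G).2 huf

theorem exists_basicClique_inr (hρ : IsForestOrder G ρ) (e : G.edgeSet) :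
    ∃ C ∈ basicCliques G, Sum.inr e ∈ C ∧ ∀ d, (totalGraph G).Adj (Sum.inr e) d →
      elemRank G ρ d ≤ elemRank G ρ (Sum.inr e) → d ∈ C := by
  have horient : ∃ v p, ∃ h : G.Adj v p, ρ p < ρ v ∧ e = ⟨s(v, p), h⟩ := by
    obtain ⟨⟨v, w⟩, h⟩ := e
    rcases (hρ.ne_of_adj h).lt_or_gt with hlt | hlt
    · exact ⟨w, v, SimpleGraph.Adj.symm h, hlt, Subtype.ext Sym2.eq_swap⟩
    · exact ⟨v, w, h, hlt, rfl⟩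
  obtain ⟨v, p, hvp, hlt, rfl⟩ := horient
  exact ⟨vertexStar G p, Or.inl ⟨p, rfl⟩, (inr_mem_vertexStar G).2 (Sym2.mem_mk_right v p),
    fun d => mem_vertexStar_of_adj_inr hρ hvp hlt⟩

theorem sum_le_one_on_basicCliques_iff (z : V ⊕ G.edgeSet → ℝ) :
    (∀ C ∈ basicCliques G, ∑ d ∈ C, z d ≤ 1) ↔
      (∀ v : V, z (Sum.inl v) +
        ∑ e : G.edgeSet, (if v ∈ (e : Sym2 V) then z (Sum.inr e) else 0) ≤ 1) ∧
      (∀ v w : V, ∀ h : G.Adj v w, z (Sum.inl v) + z (Sum.inl w) +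
        z (Sum.inr ⟨s(v, w), G.mem_edgeSet.mpr h⟩) ≤ 1) := by
  simp only [← sum_vertexStar]
  constructor
  · exact fun hz => ⟨fun v => hz _ (Or.inl ⟨v, rfl⟩), fun v w h =>
      (sum_edgeTriangle h z).symm.trans_le (hz _ (Or.inr ⟨v, w, h, rfl⟩))⟩
  · rintro ⟨hstar, htriangle⟩ C (⟨v, rfl⟩ | ⟨v, w, h, rfl⟩)
    exacts [hstar v, (sum_edgeTriangle h z).trans_le (htriangle v w h)]

end TotalGraph

theorem totalMatchingPolytope_eq_basic_of_isTree_general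
    [Fintype V] [DecidableEq V] (G : SimpleGraph V) [DecidableRel G.Adj]
    (hG : G.IsAcyclic) :
    totalMatchingPolytope G =
      {z : (V ⊕ G.edgeSet) → ℝ |
        (∀ d, 0 ≤ z d) ∧
        (∀ v : V, z (Sum.inl v) +
            ∑ e : G.edgeSet, (if v ∈ (e : Sym2 V) then z (Sum.inr e) else 0) ≤ 1) ∧
        (∀ v w : V, ∀ h : G.Adj v w,
            z (Sum.inl v) + z (Sum.inl w) +
              z (Sum.inr ⟨s(v,w), G.mem_edgeSet.mpr h⟩) ≤ 1)} := by
  obtain ⟨ρ, hρ⟩ := exists_isForestOrder hG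
  rw [totalMatchingPolytope_eq_stableSetPolytope,
    stableSetPolytope_univ_eq_of_cliqueCover (elemRank G ρ)
      (fun _ => isClique_of_mem_basicCliques G)
      (Sum.rec (exists_basicClique_inl hρ) (exists_basicClique_inr hρ))]
  simp only [sum_le_one_on_basicCliques_iff]

/-- for a tree, the total matching polytope is exactly the set of points
satisfying the node, edge and nonnegativity inequalities. -/
theorem totalMatchingPolytope_eq_basic_of_isTree
    [Fintype V] [DecidableEq V] (G : SimpleGraph V) [DecidableRel G.Adj]
    (hG : G.IsTree) :
    totalMatchingPolytope G =
      {z : (V ⊕ G.edgeSet) → ℝ |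
        (∀ d, 0 ≤ z d) ∧
        (∀ v : V, z (Sum.inl v) +
            ∑ e : G.edgeSet, (if v ∈ (e : Sym2 V) then z (Sum.inr e) else 0) ≤ 1) ∧
        (∀ v w : V, ∀ h : G.Adj v w,
            z (Sum.inl v) + z (Sum.inl w) +
              z (Sum.inr ⟨s(v,w), G.mem_edgeSet.mpr h⟩) ≤ 1)} :=
  totalMatchingPolytope_eq_basic_of_isTree_general G hG.isAcyclic
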